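/- There exist nonempty finite sets S and A, a reward r : S×A → [0,1], a discount γ ∈ (0,1), a probability distribution ρ on S, and two transition kernels P₁ and P₂ on S×A (each P_i(·|s,a) a probability distribution on S) with the following property: for every deterministic policy δ : S → A there exists a stationary stochastic policy π (π(a|s) ≥ 0, Σ_{a∈A} π(a|s) = 1) such that, whenever V₁, V₂, W₁, W₂ : S → ℝ satisfy the Bellman equations V_i(s) = r(s,δ(s)) + γ·Σ_{s'∈S} P_i(s'|s,δ(s))·V_i(s') and W_i(s) = Σ_{a∈A} π(a|s)·( r(s,a) + γ·Σ_{s'∈S} P_i(s'|s,a)·W_i(s') ) for i ∈ {1,2} and all s ∈ S, one has (1/2)·Σ_{s} ρ(s)·(W₁(s) + W₂(s)) > (1/2)·Σ_{s} ρ(s)·(V₁(s) + V₂(s)). In particular, in this two-agent federated reinforcement learning instance, the maximum of the federated objective over deterministic stationary policies is strictly smaller than its supremum over stationary stochastic policies. -/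

import Mathlib

open scoped BigOperators

/-!
Each of two agents starts outside a rewarding absorbing state, but the actions that let one agent
through block the other, so a policy moves the agents with complementary probabilities `p` and
`1 - p` per step. Moving with probability `p` per step is worth
`v p = (1 - γ)⁻¹ - (1 - γ * (1 - p))⁻¹`, which is strictly concave in `p`. A deterministic policy
has `p ∈ {0, 1}` and earns `v 0 + v 1 < 2 * v (1 / 2)`, so tossing a fair coin beats it.
-/

/-- The Bellman equation: `V` is the value function of the stationary policy `π` in the Markov
decision process with reward `r`, discount `γ` and transition kernel `P`. -/
def IsPolicyValue {S A : Type*} [Fintype S] [Fintype A] (r : S → A → ℝ) (γ : ℝ)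
    (P : S → A → S → ℝ) (π : S → A → ℝ) (V : S → ℝ) : Prop :=
  ∀ s, V s = ∑ a, π s a * (r s a + γ * ∑ s', P s a s' * V s')

theorem isPolicyValue_single_iff {S A : Type*} [Fintype S] [Fintype A] [DecidableEq A]
    {r : S → A → ℝ} {γ : ℝ} {P : S → A → S → ℝ} {δ : S → A} {V : S → ℝ} :
    IsPolicyValue r γ P (fun s ↦ Pi.single (δ s) 1) V ↔
      ∀ s, V s = r s (δ s) + γ * ∑ s', P s (δ s) s' * V s' := by
  simp [IsPolicyValue, Pi.single_apply]

/-- The reward of the escape process, in which state `0` is the start and state `1` the absorbing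
goal: only the goal is rewarded. -/
def escapeReward {A : Type*} : Fin 2 → A → ℝ :=
  ![fun _ ↦ 0, fun _ ↦ 1]

/-- The transition kernel of the escape process: at the start `0`, action `a` leads to the goal `1`
with probability `q a` and is without effect otherwise; the goal is absorbing. -/
def escapeKernel {A : Type*} (q : A → ℝ) : Fin 2 → A → Fin 2 → ℝ :=
  ![fun a ↦ ![1 - q a, q a], fun _ ↦ ![0, 1]]

/-- The value of the start state of the escape process with discount `γ` when each step leads to the
goal with probability `p`. It is written as a difference of inverses, the form in which its strict
concavity in `p` is visible. -/
noncomputable def escapeValue (γ p : ℝ) : ℝ :=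
  (1 - γ)⁻¹ - (1 - γ * (1 - p))⁻¹

theorem escapeReward_mem_Icc {A : Type*} (s : Fin 2) (a : A) :
    escapeReward s a ∈ Set.Icc (0 : ℝ) 1 := by
  fin_cases s <;> simp [escapeReward]

theorem escapeKernel_mem_stdSimplex {A : Type*} {q : A → ℝ} (hq : ∀ a, q a ∈ Set.Icc 0 1)
    (s : Fin 2) (a : A) : escapeKernel q s a ∈ stdSimplex ℝ (Fin 2) := by
  fin_cases s
  · simpa [escapeKernel, stdSimplex, Fin.forall_fin_two, and_comm] using hq a
  · simp [escapeKernel, stdSimplex, Fin.forall_fin_two]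

section EscapeProcess

variable {A : Type*} [Fintype A] {γ p : ℝ} {q : A → ℝ} {π : Fin 2 → A → ℝ} {V V₁ V₂ : Fin 2 → ℝ}

theorem IsPolicyValue.escape_apply_one_mul
    (hV : IsPolicyValue escapeReward γ (escapeKernel q) π V) (hπ : ∑ a, π 1 a = 1) :
    V 1 * (1 - γ) = 1 := by
  have hbellman : V 1 = ∑ a, π 1 a * (1 + γ * V 1) := by
    simpa [escapeReward, escapeKernel] using hV 1
  rw [← Finset.sum_mul, hπ, one_mul] at hbellman
  linear_combination hbellman

theorem IsPolicyValue.escape_apply_zero_mul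
    (hV : IsPolicyValue escapeReward γ (escapeKernel q) π V) (hπ : ∑ a, π 0 a = 1)
    (hp : ∑ a, π 0 a * q a = p) : V 0 * (1 - γ * (1 - p)) = γ * p * V 1 := by
  have hbellman : V 0 = γ * V 0 + γ * (V 1 - V 0) * p :=
    calc
      V 0 = ∑ a, π 0 a * (γ * ((1 - q a) * V 0 + q a * V 1)) := by
        simpa [escapeReward, escapeKernel] using hV 0
      _ = ∑ a, (γ * V 0 * π 0 a + γ * (V 1 - V 0) * (π 0 a * q a)) :=
        Finset.sum_congr rfl fun a _ ↦ by ring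
      _ = γ * V 0 + γ * (V 1 - V 0) * p := by
        rw [Finset.sum_add_distrib, ← Finset.mul_sum, ← Finset.mul_sum, hπ, hp, mul_one]
  linear_combination hbellman

theorem IsPolicyValue.escape_apply_zero
    (hV : IsPolicyValue escapeReward γ (escapeKernel q) π V) (hπ : ∀ s, ∑ a, π s a = 1)
    (hp : ∑ a, π 0 a * q a = p) : V 0 = escapeValue γ p := by
  have hgoal := hV.escape_apply_one_mul (hπ 1)
  have hstart := hV.escape_apply_zero_mul (hπ 0) hp
  have hγ : 1 - γ ≠ 0 := right_ne_zero_of_mul_eq_one hgoal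
  have hγp : 1 - γ * (1 - p) ≠ 0 := fun h ↦
    one_ne_zero (by linear_combination -hgoal + hstart + (V 1 - V 0) * h)
  rw [eq_inv_of_mul_eq_one_left hgoal] at hstart
  rw [escapeValue, eq_div_of_mul_eq hγp hstart]
  field_simp
  ring

theorem IsPolicyValue.escape_add_escape_one_sub
    (h₁ : IsPolicyValue escapeReward γ (escapeKernel q) π V₁)
    (h₂ : IsPolicyValue escapeReward γ (escapeKernel (1 - q)) π V₂)
    (hπ : ∀ s, ∑ a, π s a = 1) (hp : ∑ a, π 0 a * q a = p) :
    V₁ 0 + V₂ 0 = escapeValue γ p + escapeValue γ (1 - p) := by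
  have hp' : ∑ a, π 0 a * (1 - q) a = 1 - p := by
    simp [mul_sub, hπ, hp]
  rw [h₁.escape_apply_zero hπ hp, h₂.escape_apply_zero hπ hp']

end EscapeProcess

theorem two_mul_inv_midpoint_lt {x y : ℝ} (hx : 0 < x) (hy : 0 < y) (hxy : x ≠ y) :
    2 * ((x + y) / 2)⁻¹ < x⁻¹ + y⁻¹ := by
  have hconvex : StrictConvexOn ℝ (Set.Ioi 0) fun x : ℝ ↦ x⁻¹ := by
    simpa only [zpow_neg_one] using strictConvexOn_zpow (m := -1) (by decide) (by decide)
  have hmid := hconvex.2 hx hy hxy one_half_pos one_half_pos (add_halves 1)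
  simp only [smul_eq_mul, one_div_mul_eq_div, ← add_div] at hmid
  linarith

theorem one_sub_mul_one_sub_pos {γ p : ℝ} (hγ₀ : 0 ≤ γ) (hγ₁ : γ < 1) (hp : 0 ≤ p) :
    0 < 1 - γ * (1 - p) := by
  linarith [mul_nonneg hγ₀ hp]

theorem escapeValue_add_escapeValue_one_sub_lt {γ p : ℝ} (hγ₀ : 0 < γ) (hγ₁ : γ < 1)
    (hp : p ∈ Set.Icc 0 1) (hp_ne : p ≠ 1 / 2) :
    escapeValue γ p + escapeValue γ (1 - p) < 2 * escapeValue γ (1 / 2) := by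
  have hx : 0 < 1 - γ * (1 - p) := one_sub_mul_one_sub_pos hγ₀.le hγ₁ hp.1
  have hy : 0 < 1 - γ * (1 - (1 - p)) := one_sub_mul_one_sub_pos hγ₀.le hγ₁ (sub_nonneg.2 hp.2)
  have hxy : 1 - γ * (1 - p) ≠ 1 - γ * (1 - (1 - p)) := fun h ↦
    hp_ne (by linarith [mul_left_cancel₀ hγ₀.ne' (sub_right_injective h)])
  have hmid : (1 - γ * (1 - p) + (1 - γ * (1 - (1 - p)))) / 2 = 1 - γ * (1 - 1 / 2) := by ring
  have hinv := two_mul_inv_midpoint_lt hx hy hxy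
  rw [hmid] at hinv
  simp only [escapeValue]
  linarith

theorem stmt17_general {A : Type*} [Fintype A] [DecidableEq A] [Nontrivial A] {γ : ℝ}
    (hγ₀ : 0 < γ) (hγ₁ : γ < 1) :
    ∃ (r : Fin 2 → A → ℝ) (ρ : Fin 2 → ℝ) (P₁ P₂ : Fin 2 → A → Fin 2 → ℝ) (π : Fin 2 → A → ℝ),
      (∀ s a, r s a ∈ Set.Icc 0 1) ∧ ρ ∈ stdSimplex ℝ (Fin 2) ∧
      (∀ s a, P₁ s a ∈ stdSimplex ℝ (Fin 2)) ∧ (∀ s a, P₂ s a ∈ stdSimplex ℝ (Fin 2)) ∧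
      (∀ s, π s ∈ stdSimplex ℝ A) ∧
      ∀ (δ : Fin 2 → A) (V₁ V₂ W₁ W₂ : Fin 2 → ℝ),
        IsPolicyValue r γ P₁ (fun s ↦ Pi.single (δ s) 1) V₁ →
        IsPolicyValue r γ P₂ (fun s ↦ Pi.single (δ s) 1) V₂ →
        IsPolicyValue r γ P₁ π W₁ → IsPolicyValue r γ P₂ π W₂ →
        (1 / 2) * ∑ s, ρ s * (V₁ s + V₂ s) < (1 / 2) * ∑ s, ρ s * (W₁ s + W₂ s) := by
  obtain ⟨a₀, a₁, hne⟩ := exists_pair_ne A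
  let q : A → ℝ := Pi.single a₀ 1
  let π : Fin 2 → A → ℝ := fun _ ↦
    (1 / 2 : ℝ) • Pi.single a₀ 1 + (1 / 2 : ℝ) • Pi.single a₁ 1
  have hq (a : A) : q a = 0 ∨ q a = 1 := by
    by_cases ha : a = a₀ <;> simp [q, ha]
  have hq_mem (a : A) : q a ∈ Set.Icc 0 1 := by rcases hq a with h | h <;> simp [h]
  have hq_compl_mem (a : A) : (1 - q) a ∈ Set.Icc 0 1 := by rcases hq a with h | h <;> simp [h]
  have hπ (s : Fin 2) : π s ∈ stdSimplex ℝ A :=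
    convex_stdSimplex ℝ A (single_mem_stdSimplex ℝ a₀) (single_mem_stdSimplex ℝ a₁)
      one_half_pos.le one_half_pos.le (add_halves 1)
  have hπ_escape : ∑ a, π 0 a * q a = 1 / 2 := by
    simp [π, q, Pi.single_apply, hne]
  refine ⟨escapeReward, Pi.single 0 1, escapeKernel q, escapeKernel (1 - q), π,
    escapeReward_mem_Icc, single_mem_stdSimplex ℝ 0, escapeKernel_mem_stdSimplex hq_mem,
    escapeKernel_mem_stdSimplex hq_compl_mem, hπ, fun δ V₁ V₂ W₁ W₂ hV₁ hV₂ hW₁ hW₂ ↦ ?_⟩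
  have hV : V₁ 0 + V₂ 0 = escapeValue γ (q (δ 0)) + escapeValue γ (1 - q (δ 0)) :=
    hV₁.escape_add_escape_one_sub hV₂ (by simp) (by simp [Pi.single_apply])
  have hW : W₁ 0 + W₂ 0 = escapeValue γ (1 / 2) + escapeValue γ (1 - 1 / 2) :=
    hW₁.escape_add_escape_one_sub hW₂ (fun s ↦ (hπ s).2) hπ_escape
  have hlt : V₁ 0 + V₂ 0 < W₁ 0 + W₂ 0 := by
    rw [hV, hW, sub_half, ← two_mul]
    exact escapeValue_add_escapeValue_one_sub_lt hγ₀ hγ₁ (hq_mem (δ 0))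
      (by rcases hq (δ 0) with h | h <;> norm_num [h])
  simpa [Fin.sum_univ_two] using hlt

/-- There exists a two-agent federated reinforcement learning instance
(two MDPs sharing states, actions, rewards, discount and initial distribution, but with
different transition kernels) in which every deterministic stationary policy is strictly
beaten by some stationary stochastic policy for the federated objective. -/
theorem stmt17 :
    ∃ (nS nA : ℕ), 0 < nS ∧ 0 < nA ∧
    ∃ (r : Fin nS → Fin nA → ℝ) (γ : ℝ) (ρ : Fin nS → ℝ)
      (P₁ P₂ : Fin nS → Fin nA → Fin nS → ℝ),
      (∀ s a, 0 ≤ r s a ∧ r s a ≤ 1) ∧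
      (0 < γ ∧ γ < 1) ∧
      (∀ s, 0 ≤ ρ s) ∧ (∑ s, ρ s = 1) ∧
      (∀ s a, (∀ s', 0 ≤ P₁ s a s') ∧ ∑ s', P₁ s a s' = 1) ∧
      (∀ s a, (∀ s', 0 ≤ P₂ s a s') ∧ ∑ s', P₂ s a s' = 1) ∧
      ∀ δ : Fin nS → Fin nA, ∃ π : Fin nS → Fin nA → ℝ,
        (∀ s a, 0 ≤ π s a) ∧ (∀ s, ∑ a, π s a = 1) ∧
        ∀ V₁ V₂ W₁ W₂ : Fin nS → ℝ,
          (∀ s, V₁ s = r s (δ s) + γ * ∑ s', P₁ s (δ s) s' * V₁ s') →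
          (∀ s, V₂ s = r s (δ s) + γ * ∑ s', P₂ s (δ s) s' * V₂ s') →
          (∀ s, W₁ s = ∑ a, π s a * (r s a + γ * ∑ s', P₁ s a s' * W₁ s')) →
          (∀ s, W₂ s = ∑ a, π s a * (r s a + γ * ∑ s', P₂ s a s' * W₂ s')) →
          (1 / 2) * ∑ s, ρ s * (V₁ s + V₂ s) < (1 / 2) * ∑ s, ρ s * (W₁ s + W₂ s) := by
  obtain ⟨r, ρ, P₁, P₂, π, hr, hρ, hP₁, hP₂, hπ, hlt⟩ :=
    stmt17_general (A := Fin 2) one_half_pos one_half_lt_one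
  exact ⟨2, 2, two_pos, two_pos, r, 1 / 2, ρ, P₁, P₂, hr, ⟨one_half_pos, one_half_lt_one⟩,
    hρ.1, hρ.2, hP₁, hP₂, fun δ ↦ ⟨π, fun s ↦ (hπ s).1, fun s ↦ (hπ s).2, fun V₁ V₂ W₁ W₂ hV₁ hV₂ ↦
      hlt δ V₁ V₂ W₁ W₂ (isPolicyValue_single_iff.2 hV₁) (isPolicyValue_single_iff.2 hV₂)⟩⟩
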